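/- Let S be a set of n points in ℝ^d, let 0 < ε < 1 and δ > 0, and suppose S satisfies the first stability condition: for every subset S'' ⊆ S with |S''| ≥ (1−ε)n and every unit vector v ∈ ℝ^d, |(1/|S''|) · Σ_{s∈S''} v·(s − μ_S)| ≤ δ. Then for every ε' with 0 < ε' ≤ ε such that nε' is a positive integer, there is no subset S_{ε'} ⊆ S with |S_{ε'}| = nε' and no unit vector v such that |(1/(nε')) · Σ_{s∈S_{ε'}} v·(s − μ_S)| > 2δ/ε'. -/

import Mathlib

open scoped RealInnerProductSpace

/-- Empirical mean of a finite set of points in `ℝ^d`. -/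
noncomputable def empMean {d : ℕ} (A : Finset (EuclideanSpace ℝ (Fin d))) :
    EuclideanSpace ℝ (Fin d) :=
  (A.card : ℝ)⁻¹ • ∑ a ∈ A, a

/-! For a set `S` with mean `μ` and `T ⊆ S` with `|T| = ε'|S|`, the deviations `v · (s - μ)` sum to
zero over `S`, so their sums over `T` and over `S \ T` are opposite. Since `|S \ T| ≥ (1 - ε)|S|`,
stability bounds the latter sum by `|S \ T| δ = (1 - ε')|S| δ`, and dividing by `|T|` bounds the
average over `T` by `(1 - ε')δ / ε'`, which is less than `2δ / ε'`. -/

theorem sum_sub_empMean {d : ℕ} (A : Finset (EuclideanSpace ℝ (Fin d))) :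
    ∑ a ∈ A, (a - empMean A) = 0 := by
  rcases A.eq_empty_or_nonempty with rfl | hA
  · exact Finset.sum_empty
  · have hcard : (A.card : ℝ) ≠ 0 := Nat.cast_ne_zero.mpr hA.card_ne_zero
    rw [Finset.sum_sub_distrib, Finset.sum_const, ← Nat.cast_smul_eq_nsmul ℝ, empMean,
      smul_inv_smul₀ hcard, sub_self]

theorem sum_inner_sub_empMean {d : ℕ} (A : Finset (EuclideanSpace ℝ (Fin d)))
    (v : EuclideanSpace ℝ (Fin d)) : ∑ a ∈ A, ⟪v, a - empMean A⟫ = 0 := by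
  rw [← inner_sum, sum_sub_empMean, inner_zero_right]

section Average

variable {ι : Type*} {S T U : Finset ι} {f : ι → ℝ} {ε ε' δ : ℝ}

theorem abs_sum_le_card_mul_of_abs_average_le (h : |(U.card : ℝ)⁻¹ * ∑ i ∈ U, f i| ≤ δ) :
    |∑ i ∈ U, f i| ≤ U.card * δ := by
  rcases U.eq_empty_or_nonempty with rfl | hU
  · simp
  · have hcard : (0 : ℝ) < U.card := Nat.cast_pos.mpr hU.card_pos
    rwa [abs_mul, abs_of_pos (inv_pos.mpr hcard), inv_mul_le_iff₀ hcard] at h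

theorem abs_sum_sdiff_eq_of_sum_eq_zero [DecidableEq ι] (hf : ∑ i ∈ S, f i = 0) (hTS : T ⊆ S) :
    |∑ i ∈ S \ T, f i| = |∑ i ∈ T, f i| := by
  rw [← Finset.sum_sdiff hTS] at hf
  rw [eq_neg_of_add_eq_zero_left hf, abs_neg]

/-- The points enter only through their deviations `f s = ⟪v, s - μ_S⟫` in a fixed direction `v`. -/
theorem stmt_0_general (hf : ∑ i ∈ S, f i = 0)
    (hstab : ∀ U ⊆ S, (1 - ε) * S.card ≤ (U.card : ℝ) → |(U.card : ℝ)⁻¹ * ∑ i ∈ U, f i| ≤ δ)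
    (hε' : ε' ≤ ε) (hTS : T ⊆ S) (hT : T.Nonempty) (hcard : (T.card : ℝ) = S.card * ε') :
    |(T.card : ℝ)⁻¹ * ∑ i ∈ T, f i| ≤ (1 - ε') * δ / ε' := by
  classical
  have hT_pos : (0 : ℝ) < T.card := Nat.cast_pos.mpr hT.card_pos
  have hε'_ne : ε' ≠ 0 := right_ne_zero_of_mul (hcard ▸ hT_pos.ne')
  have hcompl : ((S \ T).card : ℝ) = (1 - ε') * S.card := by
    rw [Finset.cast_card_sdiff hTS, hcard]
    ring
  have hlarge : (1 - ε) * S.card ≤ ((S \ T).card : ℝ) := by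
    rw [hcompl]
    gcongr
  rw [abs_mul, abs_of_pos (inv_pos.mpr hT_pos), inv_mul_le_iff₀ hT_pos]
  calc |∑ i ∈ T, f i| = |∑ i ∈ S \ T, f i| := (abs_sum_sdiff_eq_of_sum_eq_zero hf hTS).symm
    _ ≤ (S \ T).card * δ :=
      abs_sum_le_card_mul_of_abs_average_le (hstab _ Finset.sdiff_subset hlarge)
    _ = T.card * ((1 - ε') * δ / ε') := by
      rw [hcompl, hcard]
      field_simp

end Average

/-- If `S` (of size `n`) satisfies the first stability condition with parameters
`(ε, δ)`, then for every `0 < ε' ≤ ε` with `nε'` a positive integer, there is no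
subset of `S` of size `nε'` and unit vector `v` along which the subset's average
deviation from `μ_S` exceeds `2δ/ε'`. -/
theorem stmt_0 {d : ℕ} (S : Finset (EuclideanSpace ℝ (Fin d))) (n : ℕ) (hn : S.card = n)
    (ε δ : ℝ) (hε0 : 0 < ε) (hε1 : ε < 1) (hδ : 0 < δ)
    (hstab : ∀ S'' ⊆ S, (1 - ε) * n ≤ (S''.card : ℝ) →
      ∀ v : EuclideanSpace ℝ (Fin d), ‖v‖ = 1 →
        |(S''.card : ℝ)⁻¹ * ∑ s ∈ S'', ⟪v, s - empMean S⟫| ≤ δ)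
    (ε' : ℝ) (hε'0 : 0 < ε') (hε' : ε' ≤ ε) (m : ℕ) (hm : 0 < m) (hmε' : (m : ℝ) = n * ε') :
    ¬ ∃ (Sε' : Finset (EuclideanSpace ℝ (Fin d))) (v : EuclideanSpace ℝ (Fin d)),
        Sε' ⊆ S ∧ Sε'.card = m ∧ ‖v‖ = 1 ∧
        |(n * ε')⁻¹ * ∑ s ∈ Sε', ⟪v, s - empMean S⟫| > 2 * δ / ε' := by
  subst hn
  rintro ⟨T, v, hTS, rfl, hv, hlt⟩
  have hbound := stmt_0_general (sum_inner_sub_empMean S v)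
    (fun U hU hcard => hstab U hU hcard v hv) hε' hTS (Finset.card_pos.mp hm) hmε'
  have hconst : (1 - ε') * δ / ε' ≤ 2 * δ / ε' := by
    gcongr
    linarith
  rw [hmε'] at hbound
  exact hlt.not_ge (hbound.trans hconst)
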